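/- Let a, b, c be integers with a ≥ b−1, a ≥ c−1, b ≥ c−1 and c ≥ 1. Then in ℚ(q,t): F₃(a,b,c) = F₃(a+2, b+2, c−2) + (qt)^c · F₂(a+c, b−c) + (qt)^{c−1} · F₂(a+c, b−c+2) + ∑_{j=2}^{min(a−b, 2c)} (qt)^{b+j} · F₁(a−b+2c−2j) − ∑_{j=a−b+1}^{1} (qt)^{b+j} · F₁(a−b+2c−2j), where a sum over an empty range of integers is zero. -/

import Mathlib

open Finset

noncomputable section

/-- The field `ℚ(q,t)` of rational functions in two variables over `ℚ`. -/
abbrev K : Type := FractionRing (MvPolynomial (Fin 2) ℚ)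

/-- The variable `q` in `ℚ(q,t)`. -/
def q : K := algebraMap (MvPolynomial (Fin 2) ℚ) K (MvPolynomial.X 0)

/-- The variable `t` in `ℚ(q,t)`. -/
def t : K := algebraMap (MvPolynomial (Fin 2) ℚ) K (MvPolynomial.X 1)

/-- `H₂(a,b)` as a function of the two variables `x`, `y` (so that interchanging the
arguments interchanges `q` and `t`):
`H₂(a,b;x,y) = x^{a+2b}/(1 − y/x²) + x^a y^b/(1 − x²/y)`. -/
def H₂ (a b : ℤ) (x y : K) : K :=
  x ^ (a + 2 * b) / (1 - y / x ^ 2) + x ^ a * y ^ b / (1 - x ^ 2 / y)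

/-- `H₃(a,b,c;x,y)`, the head-like standard-tableau expansion for `n = 4`. -/
def H₃ (a b c : ℤ) (x y : K) : K :=
  x ^ (a + 2 * b + 3 * c) / ((1 - y / x ^ 2) * (1 - y / x ^ 3))
    + x ^ (a + 2 * b) * y ^ c / ((1 - y / x ^ 2) * (1 - x ^ 3 / y))
    + x ^ (a + 2 * c) * y ^ b * (1 - y) / ((1 - y ^ 2 / x ^ 2) * (1 - x ^ 2 / y) * (1 - y / x))
    + x ^ a * y ^ (b + 2 * c) / ((1 - x ^ 2 / y ^ 2) * (1 - x / y))
    + x ^ (a + c) * y ^ (b + c) * (1 - x) / ((1 - x ^ 2 / y) * (1 - x / y) * (1 - y / x))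

/-- `F₁(m) = (q^{m+1} − t^{m+1})/(q − t)`, the function `F(a)` of the paper. -/
def F₁ (m : ℤ) : K := (q ^ (m + 1) - t ^ (m + 1)) / (q - t)

/-- `F₂(a,b) = H₂(a,b;q,t)/(1 − t/q) + H₂(a,b;t,q)/(1 − q/t)`. -/
def F₂ (a b : ℤ) : K := H₂ a b q t / (1 - t / q) + H₂ a b t q / (1 - q / t)

/-- `F₃(a,b,c) = H₃(a,b,c;q,t)/(1 − t/q) + H₃(a,b,c;t,q)/(1 − q/t)`. -/
def F₃ (a b c : ℤ) : K := H₃ a b c q t / (1 - t / q) + H₃ a b c t q / (1 - q / t)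

lemma poly_ne {p r : MvPolynomial (Fin 2) ℚ}
    (h : MvPolynomial.eval ![3, 5] p ≠ MvPolynomial.eval ![3, 5] r) :
    algebraMap (MvPolynomial (Fin 2) ℚ) K p ≠ algebraMap (MvPolynomial (Fin 2) ℚ) K r := by
  intro h'
  exact h (congrArg _ (IsFractionRing.injective (MvPolynomial (Fin 2) ℚ) K h'))

lemma q_ne : q ≠ 0 := by
  have := poly_ne (p := MvPolynomial.X 0) (r := 0) (by simp)
  simpa [q] using this

lemma t_ne : t ≠ 0 := by
  have := poly_ne (p := MvPolynomial.X 1) (r := 0) (by simp)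
  simpa [t] using this

lemma q_ne_t : q ≠ t := poly_ne (by simp)

lemma q_add_t : q + t ≠ 0 := by
  have := poly_ne (p := MvPolynomial.X 0 + MvPolynomial.X 1) (r := 0) (by simp; norm_num)
  simpa [q, t] using this

lemma q2 : q ^ 2 ≠ t := by
  have := poly_ne (p := MvPolynomial.X 0 ^ 2) (r := MvPolynomial.X 1) (by simp; norm_num)
  simpa [q, t] using this

lemma q3 : q ^ 3 ≠ t := by
  have := poly_ne (p := MvPolynomial.X 0 ^ 3) (r := MvPolynomial.X 1) (by simp; norm_num)
  simpa [q, t] using this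

lemma t2 : t ^ 2 ≠ q := by
  have := poly_ne (p := MvPolynomial.X 1 ^ 2) (r := MvPolynomial.X 0) (by simp; norm_num)
  simpa [q, t] using this

lemma t3 : t ^ 3 ≠ q := by
  have := poly_ne (p := MvPolynomial.X 1 ^ 3) (r := MvPolynomial.X 0) (by simp; norm_num)
  simpa [q, t] using this

/-- One half (one of the two symmetric summands) of the closed-form identity. -/
lemma half {x y : K} (hx : x ≠ 0) (hy : y ≠ 0) (hxy : x ≠ y) (hs : x + y ≠ 0)
    (h2 : x ^ 2 ≠ y) (h3 : x ^ 3 ≠ y) (a b c : ℤ) :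
    H₃ a b c x y / (1 - y / x)
      = H₃ (a + 2) (b + 2) (c - 2) x y / (1 - y / x)
        + (x * y) ^ c * (H₂ (a + c) (b - c) x y / (1 - y / x))
        + (x * y) ^ (c - 1) * (H₂ (a + c) (b - c + 2) x y / (1 - y / x))
        + (x ^ (a + 2 * c) * y ^ (b + 2) - x ^ (a + 1) * y ^ (b + 2 * c + 1)) / (x - y) ^ 2 := by
  have e1 : x - y ≠ 0 := sub_ne_zero.2 hxy
  have e2 : x ^ 2 - y ≠ 0 := sub_ne_zero.2 h2
  have e3 : x ^ 3 - y ≠ 0 := sub_ne_zero.2 h3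
  have d1 : 1 - y / x = (x - y) / x := by field_simp
  have d1' : 1 - x / y = -(x - y) / y := by field_simp; ring
  have d2 : 1 - y / x ^ 2 = (x ^ 2 - y) / x ^ 2 := by field_simp
  have d2' : 1 - x ^ 2 / y = -(x ^ 2 - y) / y := by field_simp; ring
  have d3 : 1 - y / x ^ 3 = (x ^ 3 - y) / x ^ 3 := by field_simp
  have d3' : 1 - x ^ 3 / y = -(x ^ 3 - y) / y := by field_simp; ring
  have d4 : 1 - y ^ 2 / x ^ 2 = (x - y) * (x + y) / x ^ 2 := by field_simp; ring
  have d4' : 1 - x ^ 2 / y ^ 2 = -((x - y) * (x + y)) / y ^ 2 := by field_simp; ring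
  unfold H₃ H₂
  rw [d1, d1', d2, d2', d3, d3', d4, d4']
  have m1 : x ^ (a + 2 + 2 * (b + 2) + 3 * (c - 2)) = x ^ (a + 2 * b + 3 * c) := by
    congr 1; ring
  have m2 : x ^ (a + 2 + 2 * (b + 2)) * y ^ (c - 2) = x ^ (a + 2 * b) * y ^ c * (x ^ 6 / y ^ 2) := by
    rw [show a + 2 + 2 * (b + 2) = a + 2 * b + 6 by ring, zpow_add₀ hx, zpow_sub₀ hy]
    norm_cast; ring
  have m3 : x ^ (a + 2 + 2 * (c - 2)) * y ^ (b + 2) = x ^ (a + 2 * c) * y ^ b * (y ^ 2 / x ^ 2) := by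
    rw [show a + 2 + 2 * (c - 2) = a + 2 * c - 2 by ring, zpow_add₀ hy, zpow_sub₀ hx]
    norm_cast; ring
  have m4 : x ^ (a + 2) * y ^ (b + 2 + 2 * (c - 2)) = x ^ a * y ^ (b + 2 * c) * (x ^ 2 / y ^ 2) := by
    rw [show b + 2 + 2 * (c - 2) = b + 2 * c - 2 by ring, zpow_add₀ hx, zpow_sub₀ hy]
    norm_cast; ring
  have m5 : x ^ (a + 2 + (c - 2)) * y ^ (b + 2 + (c - 2)) = x ^ (a + c) * y ^ (b + c) := by
    congr 2 <;> ring
  have n1 : (x * y) ^ c * x ^ (a + c + 2 * (b - c)) = x ^ (a + 2 * b) * y ^ c := by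
    rw [mul_zpow, mul_right_comm, ← zpow_add₀ hx]; congr 2; ring
  have n2 : (x * y) ^ c * (x ^ (a + c) * y ^ (b - c)) = x ^ (a + 2 * c) * y ^ b := by
    rw [mul_zpow, mul_mul_mul_comm, ← zpow_add₀ hx, ← zpow_add₀ hy]; congr 2 <;> ring
  have n3 : (x * y) ^ (c - 1) * x ^ (a + c + 2 * (b - c + 2))
      = x ^ (a + 2 * b) * y ^ c * (x ^ 3 / y) := by
    rw [mul_zpow, mul_right_comm, ← zpow_add₀ hx,
      show c - 1 + (a + c + 2 * (b - c + 2)) = a + 2 * b + 3 by ring, zpow_add₀ hx, zpow_sub₀ hy]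
    norm_cast; rw [pow_one]; ring
  have n4 : (x * y) ^ (c - 1) * (x ^ (a + c) * y ^ (b - c + 2))
      = x ^ (a + 2 * c) * y ^ b * (y / x) := by
    rw [mul_zpow, mul_mul_mul_comm, ← zpow_add₀ hx, ← zpow_add₀ hy,
      show c - 1 + (a + c) = a + 2 * c - 1 by ring, show c - 1 + (b - c + 2) = b + 1 by ring,
      zpow_add₀ hy, zpow_sub₀ hx]
    norm_cast; rw [pow_one, pow_one]; ring
  have k1 : x ^ (a + 2 * c) * y ^ (b + 2) = x ^ (a + 2 * c) * y ^ b * y ^ 2 := by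
    rw [zpow_add₀ hy]; norm_cast; ring
  have k2 : x ^ (a + 1) * y ^ (b + 2 * c + 1) = x ^ a * y ^ (b + 2 * c) * (x * y) := by
    rw [zpow_add_one₀ hy, zpow_add_one₀ hx]; ring
  have r : ∀ P M N D E G : K, P * ((M / D + N / E) / G) = (P * M / D + P * N / E) / G := by
    intros; ring
  rw [r, r, m1, m2, m3, m4, m5, n1, n2, n3, n4, k1, k2]
  generalize x ^ (a + 2 * b + 3 * c) = M1
  generalize x ^ (a + 2 * b) * y ^ c = M2
  generalize x ^ (a + 2 * c) * y ^ b = M3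
  generalize x ^ a * y ^ (b + 2 * c) = M4
  generalize x ^ (a + c) * y ^ (b + c) = M5
  have c2 : M2 / ((x ^ 2 - y) / x ^ 2 * (-(x ^ 3 - y) / y))
      = M2 * (x ^ 6 / y ^ 2) / ((x ^ 2 - y) / x ^ 2 * (-(x ^ 3 - y) / y))
        + M2 / ((x ^ 2 - y) / x ^ 2) + M2 * (x ^ 3 / y) / ((x ^ 2 - y) / x ^ 2) := by
    field_simp; ring
  have c3 : M3 * (1 - y) / ((x - y) * (x + y) / x ^ 2 * (-(x ^ 2 - y) / y) * ((x - y) / x))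
        / ((x - y) / x)
      = M3 * (y ^ 2 / x ^ 2) * (1 - y)
          / ((x - y) * (x + y) / x ^ 2 * (-(x ^ 2 - y) / y) * ((x - y) / x)) / ((x - y) / x)
        + M3 / (-(x ^ 2 - y) / y) / ((x - y) / x) + M3 * (y / x) / (-(x ^ 2 - y) / y) / ((x - y) / x)
        + M3 * y ^ 2 / (x - y) ^ 2 := by
    field_simp; ring
  have c4 : M4 / (-((x - y) * (x + y)) / y ^ 2 * (-(x - y) / y)) / ((x - y) / x)
      = M4 * (x ^ 2 / y ^ 2) / (-((x - y) * (x + y)) / y ^ 2 * (-(x - y) / y)) / ((x - y) / x)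
        - M4 * (x * y) / (x - y) ^ 2 := by
    field_simp; ring
  linear_combination c2 / ((x - y) / x) + c3 + c4

lemma tele (G : ℤ → K) (u : ℤ) (n : ℕ) :
    ∑ j ∈ Finset.Icc u (u + n - 1), (G j - G (j + 1)) = G u - G (u + n) := by
  induction n with
  | zero => simp
  | succ n ih =>
    have : Finset.Icc u (u + ((n + 1 : ℕ) : ℤ) - 1) = insert (u + n) (Finset.Icc u (u + n - 1)) := by
      ext k; simp only [Finset.mem_Icc, Finset.mem_insert]; omega
    rw [this, Finset.sum_insert (by simp), ih]
    push_cast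
    rw [← add_assoc]; ring

lemma tele' (G : ℤ → K) (u v : ℤ) (h : u ≤ v + 1) :
    ∑ j ∈ Finset.Icc u v, (G j - G (j + 1)) = G u - G (v + 1) := by
  obtain ⟨n, hn⟩ := Int.le.dest h
  have := tele G u n
  rwa [hn, add_sub_cancel_right] at this

/-- The telescoping primitive. -/
def Gp (b m j : ℤ) : K :=
  (q ^ (b + m + 2 - j) * t ^ (b + j) + t ^ (b + m + 2 - j) * q ^ (b + j)) / (q - t) ^ 2

lemma Gp_step (b m j : ℤ) :
    (q * t) ^ (b + j) * F₁ (m - 2 * j) = Gp b m j - Gp b m (j + 1) := by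
  have e1 : q - t ≠ 0 := sub_ne_zero.2 q_ne_t
  have f : ∀ z : K, z ≠ 0 → z ^ (b + m + 2 - j) = z ^ (b + j) * z ^ (m - 2 * j + 1) * z := by
    intro z hz
    rw [← zpow_add₀ hz, ← zpow_add_one₀ hz]; congr 1; ring
  have g : ∀ z : K, z ≠ 0 → z ^ (b + m + 2 - (j + 1)) = z ^ (b + j) * z ^ (m - 2 * j + 1) := by
    intro z hz
    rw [← zpow_add₀ hz]; congr 1; ring
  unfold Gp F₁
  rw [f q q_ne, f t t_ne, g q q_ne, g t t_ne, ← add_assoc b j 1, zpow_add_one₀ q_ne (b + j), zpow_add_one₀ t_ne (b + j),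
    mul_zpow]
  field_simp
  ring

lemma Gp_symm (b m j : ℤ) : Gp b m (m + 2 - j) = Gp b m j := by
  unfold Gp
  rw [show b + m + 2 - (m + 2 - j) = b + j by ring, show b + (m + 2 - j) = b + m + 2 - j by ring]
  ring

lemma sums_eq (a b c : ℤ) (hab : b - 1 ≤ a) (hc : 1 ≤ c) :
    (∑ j ∈ Finset.Icc (2 : ℤ) (min (a - b) (2 * c)),
            (q * t) ^ (b + j) * F₁ (a - b + 2 * c - 2 * j))
        - ∑ j ∈ Finset.Icc (a - b + 1) (1 : ℤ),
            (q * t) ^ (b + j) * F₁ (a - b + 2 * c - 2 * j)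
      = Gp b (a - b + 2 * c) 2 - Gp b (a - b + 2 * c) (a - b + 1) := by
  simp only [Gp_step]
  rcases le_or_gt (a - b) 0 with h | h
  · rw [tele' _ (a - b + 1) 1 (by omega), Finset.Icc_eq_empty (by omega)]
    simp
  · rw [tele' _ 2 _ (by omega), Finset.Icc_eq_empty (a := a - b + 1) (by omega)]
    rcases le_total (a - b) (2 * c) with h' | h'
    · rw [min_eq_left h']; simp
    · rw [min_eq_right h', ← Gp_symm b _ (2 * c + 1),
        show a - b + 2 * c + 2 - (2 * c + 1) = a - b + 1 by ring]
      simp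

theorem F₃_two_step_recursion (a b c : ℤ)
    (hab : b - 1 ≤ a) (hac : c - 1 ≤ a) (hbc : c - 1 ≤ b) (hc : 1 ≤ c) :
    F₃ a b c
      = F₃ (a + 2) (b + 2) (c - 2)
        + (q * t) ^ c * F₂ (a + c) (b - c)
        + (q * t) ^ (c - 1) * F₂ (a + c) (b - c + 2)
        + (∑ j ∈ Finset.Icc (2 : ℤ) (min (a - b) (2 * c)),
            (q * t) ^ (b + j) * F₁ (a - b + 2 * c - 2 * j))
        - ∑ j ∈ Finset.Icc (a - b + 1) (1 : ℤ),
            (q * t) ^ (b + j) * F₁ (a - b + 2 * c - 2 * j) := by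
  have e1 : q - t ≠ 0 := sub_ne_zero.2 q_ne_t
  have e1' : t - q ≠ 0 := sub_ne_zero.2 q_ne_t.symm
  have A := half q_ne t_ne q_ne_t q_add_t q2 q3 a b c
  have B := half t_ne q_ne q_ne_t.symm (by rw [add_comm]; exact q_add_t) t2 t3 a b c
  have S := sums_eq a b c hab hc
  have G2 : Gp b (a - b + 2 * c) 2 - Gp b (a - b + 2 * c) (a - b + 1)
      = (q ^ (a + 2 * c) * t ^ (b + 2) - q ^ (a + 1) * t ^ (b + 2 * c + 1)) / (q - t) ^ 2
        + (t ^ (a + 2 * c) * q ^ (b + 2) - t ^ (a + 1) * q ^ (b + 2 * c + 1)) / (t - q) ^ 2 := by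
    unfold Gp
    rw [show b + (a - b + 2 * c) + 2 - 2 = a + 2 * c by ring,
      show b + (a - b + 2 * c) + 2 - (a - b + 1) = b + 2 * c + 1 by ring,
      show b + (a - b + 1) = a + 1 by ring, show (t - q) ^ 2 = (q - t) ^ 2 by ring]
    ring
  rw [add_sub_assoc, S, G2]
  unfold F₃ F₂
  rw [A, B, mul_comm t q]
  ring
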